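/- Poisson-summation formula for the projector P_{N,θ}: for every integer N ≥ 1, every θ = (θ₁,θ₂) ∈ ℝⁿ×ℝⁿ, and all Schwartz functions f, g ∈ 𝒮(ℝⁿ), one has Σ_{w∈ℤ^{2n}} e^{−2πiσ(θ,w)} ∫_{ℝⁿ} (ρ_N(w, e^{πiQ(w)})f)(y) g(y) dy = N^{−n} Σ_{j∈{0,…,N−1}ⁿ} ( Σ_{k∈ℤⁿ} e^{2πi⟨θ₂,k⟩} f(k + (j−θ₁)/N) ) · ( Σ_{k∈ℤⁿ} e^{−2πi⟨θ₂,k⟩} g(k + (j−θ₁)/N) ), where all series converge absolutely. Equivalently, P_{N,θ} f = Σ_{j∈{0,…,N−1}ⁿ} ⟨e^{(θ₁,−θ₂)}_j, f⟩ e^θ_j in 𝒮'(ℝⁿ). -/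

import Mathlib

open BigOperators

/-- The standard symplectic form `σ((q,p),(q',p')) = ⟨p,q'⟩ − ⟨p',q⟩` on
`ℝ^{2n} = ℝⁿ × ℝⁿ`, a point `x` being written as a pair `x = (q,p)`. -/
def sigmaR (n : ℕ) (x y : (Fin n → ℝ) × (Fin n → ℝ)) : ℝ :=
  (∑ i : Fin n, x.2 i * y.1 i) - ∑ i : Fin n, y.2 i * x.1 i

/-- `Q((q,p)) = ⟨q,p⟩`. -/
def QR (n : ℕ) (x : (Fin n → ℝ) × (Fin n → ℝ)) : ℝ :=
  ∑ i : Fin n, x.1 i * x.2 i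

/-- The Schrödinger representation operator:
`(ρ_N(x,ζ)f)(y) = ζ^N e^{2πiN(⟨p,y⟩ − ⟨q,p⟩/2)} f(y−q)` for `x = (q,p)`. -/
noncomputable def rho (n N : ℕ) (x : (Fin n → ℝ) × (Fin n → ℝ)) (ζ : ℂ)
    (f : (Fin n → ℝ) → ℂ) : (Fin n → ℝ) → ℂ :=
  fun y => ζ ^ N * Complex.exp (2 * Real.pi * Complex.I * (N : ℂ) *
      (((∑ i : Fin n, x.2 i * y i : ℝ) : ℂ) - ((QR n x : ℝ) : ℂ) / 2)) * f (y - x.1)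

/-- Coercion of an integer lattice point `w ∈ ℤ^{2n}` into `ℝ^{2n}`. -/
def castVec (n : ℕ) (w : (Fin n → ℤ) × (Fin n → ℤ)) : (Fin n → ℝ) × (Fin n → ℝ) :=
  (fun i => (w.1 i : ℝ), fun i => (w.2 i : ℝ))

/-- The pairing of the Dirac comb `e^θ_j` against a test function:
`e^θ_j(f) = N^{−n/2} Σ_{k∈ℤⁿ} e^{−2πi⟨θ₂,k⟩} f(k + (j−θ₁)/N)`. -/
noncomputable def comb (n N : ℕ) (θ : (Fin n → ℝ) × (Fin n → ℝ)) (j : Fin n → ℤ)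
    (f : (Fin n → ℝ) → ℂ) : ℂ :=
  (((N : ℝ) ^ (-(n : ℝ) / 2) : ℝ) : ℂ) *
    ∑' k : Fin n → ℤ,
      Complex.exp (-(2 * Real.pi * Complex.I) *
          ((∑ i : Fin n, θ.2 i * (k i : ℝ) : ℝ) : ℂ)) *
        f (fun i => (k i : ℝ) + ((j i : ℝ) - θ.1 i) / N)

/-- The transformed test function defining the dual action of `ρ_N(x,ζ)` on tempered
distributions by `(ρ_N(x,ζ)ν)(f) := ν(f̃)`, namely
`f̃(z) = ζ^N e^{2πiN(⟨p,z⟩ + ⟨q,p⟩/2)} f(z+q)` for `x = (q,p)`. -/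
noncomputable def rhoDualTest (n N : ℕ) (x : (Fin n → ℝ) × (Fin n → ℝ)) (ζ : ℂ)
    (f : (Fin n → ℝ) → ℂ) : (Fin n → ℝ) → ℂ :=
  fun z => ζ ^ N * Complex.exp (2 * Real.pi * Complex.I * (N : ℂ) *
      (((∑ i : Fin n, x.2 i * z i : ℝ) : ℂ) + ((QR n x : ℝ) : ℂ) / 2)) * f (z + x.1)

open MeasureTheory

/-!
For fixed `m`, Poisson summation in the momentum index `m'` turns the Fourier integrals of
`y ↦ f (y - m) * g y` at the frequencies `N m'` into a sum of its values at the grid points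
`(l - θ₁) / N`, `l ∈ ℤⁿ`.  Writing `l = N k + j` with `j ∈ {0, …, N-1}ⁿ` and substituting
`(m, k) ↦ (k - m, k)`, the remaining double sum over `m` and `k` factors, for each `j`, into the
two series attached to `f` and `g`.

Absolute convergence over `(m, m')` needs decay of these integrals in both variables.  Decay in the
translation `m` is immediate from that of `f` and `g`.  The Fourier transform of a product is a
convolution, so the frequency `m'` enters as a translation on the Fourier side, and decay in `m'`
follows from the same estimate applied to the transforms of `f` and `g`.
-/

open scoped FourierTransform SchwartzMap Matrix

section Decay

lemma one_add_norm_le_mul {E : Type*} [SeminormedAddCommGroup E] (x a : E) :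
    1 + ‖a‖ ≤ (1 + ‖x + a‖) * (1 + ‖x‖) := by
  have ha : ‖a‖ ≤ ‖x + a‖ + ‖x‖ := by simpa using norm_sub_le (x + a) x
  nlinarith [mul_nonneg (norm_nonneg (x + a)) (norm_nonneg x)]

variable {E F : Type*} [NormedAddCommGroup E] [NormedSpace ℝ E]
  [NormedAddCommGroup F] [NormedSpace ℝ F]

lemma exists_norm_le_inv_one_add_norm_pow (f : 𝓢(E, F)) (k : ℕ) :
    ∃ C, 0 ≤ C ∧ ∀ x, ‖f x‖ ≤ C * ((1 + ‖x‖) ^ k)⁻¹ := by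
  refine ⟨2 ^ k * (Finset.Iic (k, 0)).sup (fun m => SchwartzMap.seminorm ℝ m.1 m.2) f,
    by positivity, fun x => ?_⟩
  rw [← div_eq_mul_inv, le_div_iff₀ (by positivity), mul_comm]
  simpa using SchwartzMap.one_add_le_sup_seminorm_apply (𝕜 := ℝ) (m := (k, 0)) le_rfl le_rfl f x

lemma exists_norm_comp_add_le (f : 𝓢(E, F)) (k : ℕ) :
    ∃ C, 0 ≤ C ∧ ∀ x a, ‖f (x + a)‖ ≤ C * (1 + ‖x‖) ^ k * ((1 + ‖a‖) ^ k)⁻¹ := by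
  obtain ⟨C, hC, hf⟩ := exists_norm_le_inv_one_add_norm_pow f k
  refine ⟨C, hC, fun x a => (hf (x + a)).trans ?_⟩
  rw [mul_assoc, ← div_eq_mul_inv ((1 + ‖x‖) ^ k)]
  gcongr
  rw [inv_le_iff_one_le_mul₀ (by positivity), div_mul_eq_mul_div, one_le_div (by positivity),
    mul_comm, ← mul_pow]
  gcongr
  exact one_add_norm_le_mul x a

/-- The product `y ↦ f (y - a) * g y`.  As `a` varies, its Fourier transforms are the values of the
short-time Fourier transform of `g` with window `f`. -/
noncomputable def translateMul (a : E) (f g : 𝓢(E, ℂ)) : 𝓢(E, ℂ) :=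
  SchwartzMap.pairing (ContinuousLinearMap.mul ℂ ℂ) (SchwartzMap.compSubConstCLM ℂ a f) g

@[simp]
lemma translateMul_apply (a : E) (f g : 𝓢(E, ℂ)) (x : E) :
    translateMul a f g x = f (x - a) * g x := rfl

lemma exists_norm_translate_mul_norm_le (f g : 𝓢(E, ℂ)) (k l : ℕ) :
    ∃ C, 0 ≤ C ∧ ∀ a x : E,
      ‖f (x - a)‖ * ‖g x‖ ≤ C * ((1 + ‖a‖) ^ k)⁻¹ * ((1 + ‖x‖) ^ l)⁻¹ := by
  obtain ⟨Cf, hCf, hf⟩ := exists_norm_comp_add_le f k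
  obtain ⟨Cg, hCg, hg⟩ := exists_norm_le_inv_one_add_norm_pow g (k + l)
  refine ⟨Cf * Cg, by positivity, fun a x => ?_⟩
  calc ‖f (x - a)‖ * ‖g x‖
      ≤ (Cf * (1 + ‖x‖) ^ k * ((1 + ‖a‖) ^ k)⁻¹) * (Cg * ((1 + ‖x‖) ^ (k + l))⁻¹) := by
        gcongr
        · simpa only [← sub_eq_add_neg, norm_neg] using hf x (-a)
        · exact hg x
    _ = Cf * Cg * ((1 + ‖a‖) ^ k)⁻¹ * ((1 + ‖x‖) ^ l)⁻¹ := by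
        rw [pow_add]
        field_simp

lemma exists_integral_norm_translate_mul_norm_le [MeasurableSpace E] (μ : Measure E)
    [μ.HasTemperateGrowth] (f g : 𝓢(E, ℂ)) (k : ℕ) :
    ∃ C, 0 ≤ C ∧ ∀ a : E, ∫ x, ‖f (x - a)‖ * ‖g x‖ ∂μ ≤ C * ((1 + ‖a‖) ^ k)⁻¹ := by
  obtain ⟨C, hC, hfg⟩ := exists_norm_translate_mul_norm_le f g k μ.integrablePower
  have hint : Integrable (fun x : E => ((1 + ‖x‖) ^ μ.integrablePower)⁻¹) μ := by
    simpa only [Real.rpow_neg (add_nonneg zero_le_one (norm_nonneg _)), Real.rpow_natCast]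
      using Measure.integrable_pow_neg_integrablePower μ
  refine ⟨C * ∫ x, ((1 + ‖x‖) ^ μ.integrablePower)⁻¹ ∂μ,
    mul_nonneg hC (integral_nonneg fun x => by positivity), fun a => ?_⟩
  calc ∫ x, ‖f (x - a)‖ * ‖g x‖ ∂μ
      ≤ ∫ x, C * ((1 + ‖a‖) ^ k)⁻¹ * ((1 + ‖x‖) ^ μ.integrablePower)⁻¹ ∂μ :=
        integral_mono_of_nonneg (.of_forall fun x => by positivity) (hint.const_mul _)
          (.of_forall (hfg a))
    _ = _ := by rw [integral_const_mul, mul_right_comm]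

end Decay

section ShortTimeFourier

variable {V : Type*} [NormedAddCommGroup V] [InnerProductSpace ℝ V] [FiniteDimensional ℝ V]
  [MeasurableSpace V] [BorelSpace V]

lemma norm_fourierInv_comp_sub (f : V → ℂ) (a w : V) :
    ‖𝓕⁻ (fun x => f (x - a)) w‖ = ‖𝓕⁻ f w‖ := by
  have hphase : 𝓕⁻ (fun x => f (x - a)) w = 𝐞 (inner ℝ a w) • 𝓕⁻ f w := by
    rw [Real.fourierInv_eq, Real.fourierInv_eq, Circle.smul_def, ← integral_smul,
      ← integral_add_right_eq_self _ a]
    refine integral_congr_ae (.of_forall fun x => ?_)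
    simp only [add_sub_cancel_right, inner_add_left, AddChar.map_add_eq_mul, mul_comm, mul_smul,
      Circle.smul_def]
  rw [hphase, Circle.norm_smul]

lemma fourierInv_translateMul_apply (a : V) (f g : 𝓢(V, ℂ)) (w : V) :
    𝓕⁻ (translateMul a f g) w =
      ∫ t, 𝓕⁻ (SchwartzMap.compSubConstCLM ℂ a f) t * 𝓕 g (t - w) := by
  set fa := SchwartzMap.compSubConstCLM ℂ a f
  have hconv : 𝓕⁻ (translateMul a f g) =
      SchwartzMap.convolution (ContinuousLinearMap.mul ℂ ℂ) (𝓕⁻ fa) (𝓕⁻ g) := by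
    simp only [SchwartzMap.convolution, LinearMap.coe_mk, AddHom.coe_mk,
      ContinuousLinearMap.comp_apply, FourierTransform.fourierCLM_apply,
      FourierTransform.fourierInvCLM_apply,
      FourierTransform.fourier_fourierInv_eq, fa, translateMul]
  have hneg (t : V) : 𝓕⁻ g (w - t) = 𝓕 g (t - w) := by
    rw [SchwartzMap.fourierInv_apply_eq]
    simp
  rw [hconv, SchwartzMap.convolution_apply]
  exact integral_congr_ae (.of_forall fun t => by simp [hneg])

lemma norm_fourierInv_translateMul_le_integral (a : V) (f g : 𝓢(V, ℂ)) (w : V) :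
    ‖𝓕⁻ (translateMul a f g) w‖ ≤ ∫ x, ‖f (x - a)‖ * ‖g x‖ := by
  rw [SchwartzMap.fourierInv_coe, Real.fourierInv_eq]
  refine (norm_integral_le_integral_norm _).trans_eq ?_
  simp only [Circle.norm_smul, translateMul_apply, norm_mul]

lemma norm_fourierInv_translateMul_le_integral_fourier (a : V) (f g : 𝓢(V, ℂ)) (w : V) :
    ‖𝓕⁻ (translateMul a f g) w‖ ≤ ∫ t, ‖𝓕 g (t - w)‖ * ‖𝓕⁻ f t‖ := by
  rw [fourierInv_translateMul_apply]
  refine (norm_integral_le_integral_norm _).trans_eq ?_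
  have hphase (t : V) : ‖𝓕⁻ (SchwartzMap.compSubConstCLM ℂ a f) t‖ = ‖𝓕⁻ f t‖ := by
    rw [SchwartzMap.fourierInv_coe, SchwartzMap.fourierInv_coe]
    exact norm_fourierInv_comp_sub f a t
  simp only [norm_mul, hphase, mul_comm]

lemma exists_norm_fourierInv_translateMul_le (f g : 𝓢(V, ℂ)) (k : ℕ) :
    ∃ C, ∀ a w : V, ‖𝓕⁻ (translateMul a f g) w‖ ≤
      C * ((1 + ‖a‖) ^ k)⁻¹ * ((1 + ‖w‖) ^ k)⁻¹ := by
  obtain ⟨C, hC, hspace⟩ := exists_integral_norm_translate_mul_norm_le volume f g (k * 2)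
  obtain ⟨D, hD, hfreq⟩ := exists_integral_norm_translate_mul_norm_le volume (𝓕 g) (𝓕⁻ f) (k * 2)
  -- The first bound decays in `a`, the second in `w`; their geometric mean decays in both.
  refine ⟨√(C * D), fun a w => le_of_sq_le_sq ?_ (by positivity)⟩
  calc ‖𝓕⁻ (translateMul a f g) w‖ ^ 2
      ≤ (C * ((1 + ‖a‖) ^ (k * 2))⁻¹) * (D * ((1 + ‖w‖) ^ (k * 2))⁻¹) := by
        rw [sq]
        gcongr
        · exact (norm_fourierInv_translateMul_le_integral a f g w).trans (hspace a)
        · exact (norm_fourierInv_translateMul_le_integral_fourier a f g w).trans (hfreq w)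
    _ = _ := by
        rw [mul_pow, mul_pow, Real.sq_sqrt (by positivity), inv_pow, inv_pow, ← pow_mul, ← pow_mul]
        ring

end ShortTimeFourier

section IntegerLattice

variable {ι : Type*}

/-- The standard integer lattice in `ι → ℝ`, as the coordinatewise cast from `ι → ℤ`. -/
def intVec : (ι → ℤ) →+ (ι → ℝ) := (Int.castAddHom ℝ).compLeft ι

@[simp]
lemma intVec_apply (m : ι → ℤ) (i : ι) : intVec m i = m i := rfl

lemma intVec_injective : Function.Injective (intVec : (ι → ℤ) → ι → ℝ) :=
  Int.cast_injective.comp_left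

variable [Fintype ι]

lemma intVec_dotProduct_intVec (m k : ι → ℤ) : intVec m ⬝ᵥ intVec k = ((m ⬝ᵥ k : ℤ) : ℝ) := by
  simp [dotProduct]

lemma summable_inv_one_add_norm_intVec_pow {k : ℕ} (hk : Fintype.card ι < k) :
    Summable fun m : ι → ℤ => ((1 + ‖(intVec m : ι → ℝ)‖) ^ k)⁻¹ := by
  let L : Submodule ℤ (ι → ℝ) := Submodule.span ℤ (Set.range (Pi.basisFun ℝ ι))
  have hmem (m : ι → ℤ) : intVec m ∈ L :=
    ((Pi.basisFun ℝ ι).mem_span_iff_repr_mem ℤ _).2 fun i => ⟨m i, by simp⟩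
  have hrank : Module.finrank ℤ L < k := by
    rwa [ZLattice.rank ℝ L, Module.finrank_fintype_fun_eq_card]
  have hinj : Function.Injective fun m : ι → ℤ => (⟨intVec m, hmem m⟩ : L) :=
    fun _ _ h => intVec_injective (congrArg Subtype.val h)
  refine .of_norm_bounded_eventually
    ((ZLattice.summable_norm_sub_inv_pow L k hrank 0).comp_injective hinj) ?_
  filter_upwards [Set.finite_singleton (0 : ι → ℤ) |>.compl_mem_cofinite] with m hm
  have hpos : 0 < ‖(intVec m : ι → ℝ)‖ :=
    norm_pos_iff.2 ((map_ne_zero_iff intVec intVec_injective).2 hm)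
  rw [Real.norm_of_nonneg (by positivity), Function.comp_apply, sub_zero, inv_pow]
  gcongr
  exact le_add_of_nonneg_left zero_le_one

end IntegerLattice

section DotFourierInv

variable {ι : Type*} [Fintype ι]

/-- The inverse Fourier integral on `ι → ℝ` with respect to the dot product.  Mathlib's `𝓕⁻`
does not apply, since the sup norm on `ι → ℝ` does not come from an inner product. -/
noncomputable def dotFourierInv (h : (ι → ℝ) → ℂ) (w : ι → ℝ) : ℂ :=
  ∫ y, 𝐞 (y ⬝ᵥ w) • h y

lemma dotFourierInv_eq_fourierInv (h : (ι → ℝ) → ℂ) (w : ι → ℝ) :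
    dotFourierInv h w =
      𝓕⁻ (fun v : EuclideanSpace ℝ ι => h (WithLp.ofLp v)) (WithLp.toLp 2 w) := by
  rw [Real.fourierInv_eq, dotFourierInv, ← (PiLp.volume_preserving_ofLp ι).integral_comp
    (MeasurableEquiv.toLp 2 (ι → ℝ)).symm.measurableEmbedding]
  simp [PiLp.inner_apply, dotProduct, mul_comm]

lemma exists_norm_dotFourierInv_translateMul_le (f g : 𝓢(ι → ℝ, ℂ)) (k : ℕ) :
    ∃ C, ∀ a w : ι → ℝ, ‖dotFourierInv (translateMul a f g) w‖ ≤
      C * ((1 + ‖a‖) ^ k)⁻¹ * ((1 + ‖w‖) ^ k)⁻¹ := by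
  let toEuclidean :=
    SchwartzMap.compCLMOfContinuousLinearEquiv ℂ (F := ℂ) (EuclideanSpace.equiv ι ℝ)
  obtain ⟨C, hC⟩ := exists_norm_fourierInv_translateMul_le (toEuclidean f) (toEuclidean g) k
  have hC0 : 0 ≤ C := by simpa using (norm_nonneg _).trans (hC 0 0)
  have hnorm (x : ι → ℝ) : ‖x‖ ≤ ‖(WithLp.toLp 2 x : EuclideanSpace ℝ ι)‖ :=
    (pi_norm_le_iff_of_nonneg (norm_nonneg _)).2 (PiLp.norm_apply_le (WithLp.toLp 2 x))
  refine ⟨C, fun a w => ?_⟩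
  calc ‖dotFourierInv (translateMul a f g) w‖
      = ‖𝓕⁻ (translateMul (WithLp.toLp 2 a) (toEuclidean f) (toEuclidean g))
          (WithLp.toLp 2 w)‖ := by
        rw [dotFourierInv_eq_fourierInv, SchwartzMap.fourierInv_coe]
        rfl
    _ ≤ C * ((1 + ‖(WithLp.toLp 2 a : EuclideanSpace ℝ ι)‖) ^ k)⁻¹ *
          ((1 + ‖(WithLp.toLp 2 w : EuclideanSpace ℝ ι)‖) ^ k)⁻¹ := hC _ _
    _ ≤ C * ((1 + ‖a‖) ^ k)⁻¹ * ((1 + ‖w‖) ^ k)⁻¹ := by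
        gcongr <;> exact hnorm _

lemma summable_norm_dotFourierInv_translateMul (f g : 𝓢(ι → ℝ, ℂ)) :
    Summable fun w : (ι → ℤ) × (ι → ℤ) =>
      ‖dotFourierInv (translateMul (intVec w.1) f g) (intVec w.2)‖ := by
  obtain ⟨C, hC⟩ := exists_norm_dotFourierInv_translateMul_le f g (Fintype.card ι + 1)
  have hlattice := summable_inv_one_add_norm_intVec_pow (Nat.lt_succ_self (Fintype.card ι))
  refine .of_nonneg_of_le (fun _ => norm_nonneg _) (fun w => hC _ _) ?_
  simp only [mul_assoc]
  exact (hlattice.mul_of_nonneg hlattice (fun _ => by positivity) fun _ => by positivity).mul_left C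

end DotFourierInv

section Poisson

variable {ι : Type*}

/-- The half-open unit cube with lower corner `a`. -/
def unitCube (a : ι → ℝ) : Set (ι → ℝ) := {x | ∀ i, x i ∈ Set.Ioc (a i) (a i + 1)}

lemma mem_unitCube_intVec {k : ι → ℤ} {x : ι → ℝ} :
    x ∈ unitCube (intVec k) ↔ (fun i => ⌈x i⌉ - 1) = k := by
  simp only [unitCube, Set.mem_ofPred_eq, Set.mem_Ioc, intVec_apply, funext_iff,
    sub_eq_iff_eq_add, Int.ceil_eq_iff, Int.cast_add, Int.cast_one, add_sub_cancel_right]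

lemma preimage_add_right_unitCube (a : ι → ℝ) : (· + a) ⁻¹' unitCube a = unitCube 0 := by
  ext x
  simp only [unitCube, Set.mem_preimage, Set.mem_ofPred_eq, Set.mem_Ioc, Pi.add_apply,
    Pi.zero_apply, zero_add, add_comm (x _), add_le_add_iff_left, lt_add_iff_pos_right]

lemma measurableSet_unitCube [Countable ι] (a : ι → ℝ) : MeasurableSet (unitCube a) :=
  .univ_pi' fun _ => measurableSet_Ioc

/-- The quotient map from `ι → ℝ` onto the torus `(ℝ/ℤ)^ι`. -/
def torusMk (x : ι → ℝ) : UnitAddTorus ι := fun i => (x i : UnitAddCircle)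

lemma isQuotientMap_torusMk : Topology.IsQuotientMap (torusMk : (ι → ℝ) → UnitAddTorus ι) :=
  (IsOpenQuotientMap.piMap fun _ => QuotientAddGroup.isOpenQuotientMap_mk).isQuotientMap

lemma exists_eq_add_intVec_of_torusMk_eq {x y : ι → ℝ} (h : torusMk x = torusMk y) :
    ∃ k, y = x + intVec k := by
  have hcoord (i : ι) : ∃ k : ℤ, y i = x i + k := by
    obtain ⟨k, hk⟩ := AddSubgroup.mem_zmultiples_iff.1 (QuotientAddGroup.eq.1 (congrFun h i))
    exact ⟨k, by rw [zsmul_one] at hk; rw [hk, add_neg_cancel_left]⟩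
  choose k hk using hcoord
  exact ⟨k, funext hk⟩

open TopologicalSpace in
lemma exists_periodization [Finite ι] (f : C(ι → ℝ, ℂ))
    (hf : ∀ K : Compacts (ι → ℝ), Summable fun k : ι → ℤ =>
      ‖(f.comp (.addRight (intVec k))).restrict K‖) :
    ∃ F : C(UnitAddTorus ι, ℂ), ∀ x,
      HasSum (fun k : ι → ℤ => f (x + intVec k)) (F (torusMk x)) := by
  let S : C(ι → ℝ, ℂ) := ∑' k : ι → ℤ, f.comp (.addRight (intVec k))
  have hS (x : ι → ℝ) : HasSum (fun k : ι → ℤ => f (x + intVec k)) (S x) :=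
    ContinuousMap.hasSum_apply (ContinuousMap.summable_of_locally_summable_norm hf).hasSum x
  have hperiodic (x : ι → ℝ) (l : ι → ℤ) : S (x + intVec l) = S x := by
    refine (hS _).unique (((Equiv.addLeft l).hasSum_iff.2 (hS x)).congr_fun fun k => ?_)
    simp [add_assoc]
  have hfactors : Function.FactorsThrough S torusMk := fun x y hxy => by
    obtain ⟨k, rfl⟩ := exists_eq_add_intVec_of_torusMk_eq hxy
    exact (hperiodic x k).symm
  let q : C(ι → ℝ, UnitAddTorus ι) := ⟨torusMk, isQuotientMap_torusMk.continuous⟩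
  refine ⟨Topology.IsQuotientMap.lift (f := q) isQuotientMap_torusMk S hfactors, fun x => ?_⟩
  convert hS x
  exact DFunLike.congr_fun
    (Topology.IsQuotientMap.lift_comp (f := q) isQuotientMap_torusMk S hfactors) x

variable [Fintype ι]

lemma hasSum_setIntegral_unitCube_comp_add {E : Type*} [NormedAddCommGroup E] [NormedSpace ℝ E]
    {F : (ι → ℝ) → E} (hF : Integrable F) :
    HasSum (fun k : ι → ℤ => ∫ x in unitCube 0, F (x + intVec k)) (∫ x, F x) := by
  have hcover : ⋃ k : ι → ℤ, unitCube (intVec k) = Set.univ := by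
    ext x
    simp [mem_unitCube_intVec]
  have hdisjoint : Pairwise (Function.onFun Disjoint fun k : ι → ℤ => unitCube (intVec k)) :=
    fun k l hkl => Set.disjoint_left.2 fun x hk hl =>
      hkl ((mem_unitCube_intVec.1 hk).symm.trans (mem_unitCube_intVec.1 hl))
  have hsum := hasSum_integral_iUnion (fun k => measurableSet_unitCube (intVec k)) hdisjoint
    hF.integrableOn
  rw [hcover, setIntegral_univ] at hsum
  refine hsum.congr_fun fun k => ?_
  rw [← (measurePreserving_add_right volume (intVec k)).setIntegral_preimage_emb
    (measurableEmbedding_addRight (intVec k)) F, preimage_add_right_unitCube]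

lemma mFourier_torusMk (m : ι → ℤ) (x : ι → ℝ) :
    UnitAddTorus.mFourier m (torusMk x) = 𝐞 (x ⬝ᵥ intVec m) := by
  simp only [UnitAddTorus.mFourier, ContinuousMap.coe_mk, torusMk, fourier_coe_apply,
    Real.fourierChar_apply, ← Complex.exp_sum]
  congr 1
  simp only [dotProduct, intVec_apply]
  push_cast
  rw [Finset.mul_sum, Finset.sum_mul]
  refine Finset.sum_congr rfl fun i _ => ?_
  ring

lemma integrable_fourierChar_dotProduct_smul {f : (ι → ℝ) → ℂ} (hf : Integrable f)
    (w : ι → ℝ) : Integrable fun x => 𝐞 (x ⬝ᵥ w) • f x := by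
  have hphase : Continuous fun x : ι → ℝ => 𝐞 (x ⬝ᵥ w) :=
    Real.continuous_fourierChar.comp (continuous_id.dotProduct continuous_const)
  exact hf.mono (hphase.aestronglyMeasurable.smul hf.1)
    (.of_forall fun x => (Circle.norm_smul _ _).le)

lemma fourierChar_add_intVec_dotProduct_intVec (x : ι → ℝ) (k m : ι → ℤ) :
    𝐞 ((x + intVec k) ⬝ᵥ intVec m) = 𝐞 (x ⬝ᵥ intVec m) := by
  have hone : 𝐞 (intVec k ⬝ᵥ intVec m) = 1 := by
    ext
    rw [Real.fourierChar_apply, intVec_dotProduct_intVec, Circle.coe_one,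
      ← Complex.exp_int_mul_two_pi_mul_I (k ⬝ᵥ m)]
    push_cast
    ring_nf
  rw [add_dotProduct, AddChar.map_add_eq_mul, hone, mul_one]

lemma mFourierCoeff_eq_dotFourierInv {f : (ι → ℝ) → ℂ} (hf : Integrable f)
    {F : C(UnitAddTorus ι, ℂ)}
    (hF : ∀ x, HasSum (fun k : ι → ℤ => f (x + intVec k)) (F (torusMk x))) (m : ι → ℤ) :
    UnitAddTorus.mFourierCoeff F m = dotFourierInv f (intVec (-m)) := by
  let h (x : ι → ℝ) : ℂ := 𝐞 (x ⬝ᵥ intVec (-m)) • f x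
  have hint : Integrable h := integrable_fourierChar_dotProduct_smul hf _
  have hperiodic (x : ι → ℝ) (k : ι → ℤ) :
      h (x + intVec k) = 𝐞 (x ⬝ᵥ intVec (-m)) • f (x + intVec k) := by
    simp only [h, fourierChar_add_intVec_dotProduct_intVec]
  have hintegrand (x : ι → ℝ) :
      UnitAddTorus.mFourier (-m) (torusMk x) • F (torusMk x) = ∑' k : ι → ℤ, h (x + intVec k) := by
    simp only [hperiodic]
    rw [((hF x).const_smul _).tsum_eq, mFourier_torusMk]
    rfl
  have hsummable : Summable fun k : ι → ℤ => ∫ x in unitCube 0, ‖h (x + intVec k)‖ :=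
    (hasSum_setIntegral_unitCube_comp_add hint.norm).summable
  calc UnitAddTorus.mFourierCoeff F m
      = ∫ x in unitCube 0, ∑' k : ι → ℤ, h (x + intVec k) := by
        rw [UnitAddTorus.mFourierCoeff_eq_integral _ _ 0]
        exact integral_congr_ae (.of_forall hintegrand)
    _ = ∑' k : ι → ℤ, ∫ x in unitCube 0, h (x + intVec k) :=
        (integral_tsum_of_summable_integral_norm
          (fun k => (hint.comp_add_right (intVec k)).integrableOn) hsummable).symm
    _ = dotFourierInv f (intVec (-m)) := (hasSum_setIntegral_unitCube_comp_add hint).tsum_eq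

lemma hasSum_fourierChar_smul_dotFourierInv {f : (ι → ℝ) → ℂ} (hf : Integrable f)
    {F : C(UnitAddTorus ι, ℂ)}
    (hF : ∀ x, HasSum (fun k : ι → ℤ => f (x + intVec k)) (F (torusMk x)))
    (hcoeff : Summable fun m : ι → ℤ => dotFourierInv f (intVec m)) (x : ι → ℝ) :
    HasSum (fun m : ι → ℤ => 𝐞 (-(x ⬝ᵥ intVec m)) • dotFourierInv f (intVec m))
      (F (torusMk x)) := by
  have hcoeff' : Summable (UnitAddTorus.mFourierCoeff F) := by
    rw [funext (mFourierCoeff_eq_dotFourierInv hf hF)]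
    exact (Equiv.neg (ι → ℤ)).summable_iff.2 hcoeff
  have hseries := UnitAddTorus.hasSum_mFourier_series_apply_of_summable hcoeff' (torusMk x)
  refine ((Equiv.neg (ι → ℤ)).hasSum_iff.2 hseries).congr_fun fun m => ?_
  simp [mFourierCoeff_eq_dotFourierInv hf hF, mFourier_torusMk, Circle.smul_def, mul_comm]

lemma summable_norm_comp_add_intVec (f : 𝓢(ι → ℝ, ℂ)) (x : ι → ℝ) :
    Summable fun k : ι → ℤ => ‖f (x + intVec k)‖ := by
  obtain ⟨C, -, hf⟩ := exists_norm_comp_add_le f (Fintype.card ι + 1)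
  exact .of_nonneg_of_le (fun _ => norm_nonneg _) (fun k => hf x (intVec k))
    ((summable_inv_one_add_norm_intVec_pow (Nat.lt_succ_self _)).mul_left _)

open TopologicalSpace in
lemma summable_norm_restrict_comp_add_intVec (f : 𝓢(ι → ℝ, ℂ)) (K : Compacts (ι → ℝ)) :
    Summable fun k : ι → ℤ =>
      ‖((f : C(ι → ℝ, ℂ)).comp (.addRight (intVec k))).restrict K‖ := by
  obtain ⟨C, hC, hf⟩ := exists_norm_comp_add_le f (Fintype.card ι + 1)
  obtain ⟨R, hR0, hR⟩ := K.isCompact.isBounded.exists_pos_norm_le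
  refine .of_nonneg_of_le (fun _ => norm_nonneg _) (fun k => ?_)
    ((summable_inv_one_add_norm_intVec_pow (Nat.lt_succ_self (Fintype.card ι))).mul_left
      (C * (1 + R) ^ (Fintype.card ι + 1)))
  refine (ContinuousMap.norm_le _ (by positivity)).2 fun x => (hf x (intVec k)).trans ?_
  gcongr
  exact hR x x.2

lemma tsum_comp_add_intVec_eq_tsum_dotFourierInv (f : 𝓢(ι → ℝ, ℂ))
    (hcoeff : Summable fun m : ι → ℤ => dotFourierInv f (intVec m)) (x : ι → ℝ) :
    ∑' k : ι → ℤ, f (x + intVec k) =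
      ∑' m : ι → ℤ, 𝐞 (-(x ⬝ᵥ intVec m)) • dotFourierInv f (intVec m) := by
  obtain ⟨F, hF⟩ := exists_periodization (f : C(ι → ℝ, ℂ))
    (summable_norm_restrict_comp_add_intVec f)
  exact (hF x).tsum_eq.trans
    (hasSum_fourierChar_smul_dotFourierInv f.integrable hF hcoeff x).tsum_eq.symm

end Poisson

section ScaledPoisson

variable {ι : Type*}

/-- The point `(l - t) / c` of the lattice `c⁻¹ ℤ^ι` shifted by `-t / c`; for `c = N` these are the
points at which the Dirac combs `e^θ_j` with `θ₁ = t` are supported. -/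
noncomputable def gridPoint (c : ℝ) (t : ι → ℝ) (l : ι → ℤ) : ι → ℝ := c⁻¹ • (intVec l - t)

lemma gridPoint_nsmul_add {N : ℕ} [NeZero N] (t : ι → ℝ) (k l : ι → ℤ) :
    gridPoint N t (N • k + l) = gridPoint N t l + intVec k := by
  have hN : (N : ℝ) ≠ 0 := NeZero.ne _
  rw [gridPoint, gridPoint, map_add, map_nsmul, ← Nat.cast_smul_eq_nsmul ℝ, add_sub_assoc, smul_add,
    inv_smul_smul₀ hN, add_comm]

variable [Fintype ι]

/-- The dilated Schwartz function `x ↦ h (x / c)`. -/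
noncomputable def dilate {c : ℝ} (hc : c ≠ 0) (h : 𝓢(ι → ℝ, ℂ)) : 𝓢(ι → ℝ, ℂ) :=
  SchwartzMap.compCLMOfContinuousLinearEquiv ℂ
    (ContinuousLinearEquiv.smulLeft (Units.mk0 c hc)⁻¹ : (ι → ℝ) ≃L[ℝ] (ι → ℝ)) h

lemma dilate_apply {c : ℝ} (hc : c ≠ 0) (h : 𝓢(ι → ℝ, ℂ)) (x : ι → ℝ) :
    dilate hc h x = h (c⁻¹ • x) := rfl

lemma dilate_neg_add_intVec {c : ℝ} (hc : c ≠ 0) (h : 𝓢(ι → ℝ, ℂ)) (t : ι → ℝ) (l : ι → ℤ) :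
    dilate hc h (-t + intVec l) = h (gridPoint c t l) := by
  rw [dilate_apply, gridPoint, sub_eq_neg_add]

lemma summable_gridPoint (h : 𝓢(ι → ℝ, ℂ)) {c : ℝ} (hc : c ≠ 0) (t : ι → ℝ) :
    Summable fun l : ι → ℤ => h (gridPoint c t l) := by
  simpa only [dilate_neg_add_intVec] using
    (summable_norm_comp_add_intVec (dilate hc h) (-t)).of_norm

lemma dotFourierInv_dilate {c : ℝ} (hc : c ≠ 0) (h : 𝓢(ι → ℝ, ℂ)) (w : ι → ℝ) :
    dotFourierInv (dilate hc h) w = |c ^ Fintype.card ι| • dotFourierInv h (c • w) := by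
  rw [dotFourierInv, dotFourierInv, ← Module.finrank_fintype_fun_eq_card ℝ,
    ← Measure.integral_comp_inv_smul]
  refine integral_congr_ae (.of_forall fun y => ?_)
  simp only [dilate_apply, smul_dotProduct, dotProduct_smul, smul_smul, mul_inv_cancel₀ hc,
    one_smul]

lemma tsum_gridPoint_eq_tsum_dotFourierInv (h : 𝓢(ι → ℝ, ℂ)) {c : ℝ} (hc : c ≠ 0)
    (hcoeff : Summable fun p : ι → ℤ => dotFourierInv h (c • intVec p)) (t : ι → ℝ) :
    ∑' l : ι → ℤ, h (gridPoint c t l) =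
      |c ^ Fintype.card ι| • ∑' p : ι → ℤ, 𝐞 (t ⬝ᵥ intVec p) • dotFourierInv h (c • intVec p) := by
  have hpoisson := tsum_comp_add_intVec_eq_tsum_dotFourierInv (dilate hc h)
    (by simpa only [dotFourierInv_dilate] using hcoeff.const_smul _) (-t)
  simp only [dilate_neg_add_intVec, neg_dotProduct, neg_neg, dotFourierInv_dilate] at hpoisson
  rw [hpoisson, ← tsum_const_smul'']
  exact tsum_congr fun p => smul_comm _ _ _

end ScaledPoisson

lemma tsum_eq_sum_tsum_residue {ι E : Type*} [Fintype ι] [DecidableEq ι]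
    [NormedAddCommGroup E] [CompleteSpace E]
    {N : ℕ} [NeZero N] {F : (ι → ℤ) → E} (hF : Summable F) :
    ∑' l, F l = ∑ j : ι → Fin N, ∑' k : ι → ℤ, F (N • k + fun i => (j i : ℤ)) := by
  let e : (ι → Fin N) × (ι → ℤ) ≃ (ι → ℤ) := (Equiv.prodComm _ _).trans
    ((Equiv.arrowProdEquivProdArrow ι _ _).symm.trans
      (Equiv.piCongrRight fun _ => (Int.divModEquiv N).symm))
  have he (j : ι → Fin N) (k : ι → ℤ) : e (j, k) = N • k + fun i => (j i : ℤ) := by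
    ext i
    simp [e, Int.divModEquiv, mul_comm]
  have hFe : Summable fun x => F (e x) := e.summable_iff.2 hF
  rw [← e.tsum_eq, hFe.tsum_prod, tsum_fintype]
  simp only [he]

lemma hasSum_tsum_sub_mul {G R : Type*} [AddCommGroup G] [NormedRing R] [CompleteSpace R]
    {A B : G → R} (hA : Summable fun k => ‖A k‖) (hB : Summable fun k => ‖B k‖) :
    HasSum (fun m => ∑' k, A (k - m) * B k) ((∑' k, A k) * ∑' k, B k) := by
  have hprod : HasSum (fun x : G × G => A x.1 * B x.2) ((∑' k, A k) * ∑' k, B k) := by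
    rw [tsum_mul_tsum_of_summable_norm hA hB]
    exact (summable_mul_of_summable_norm hA hB).hasSum
  have hinvolutive : Function.Involutive fun x : G × G => (x.2 - x.1, x.2) := fun x => by simp
  have hsheared := hinvolutive.toPerm.hasSum_iff.2 hprod
  have hshear : HasSum (fun x : G × G => A (x.2 - x.1) * B x.2) _ := hsheared
  exact hshear.prod_fiberwise fun m => (hshear.summable.prod_factor m).hasSum

section Zak

variable {ι : Type*} [Fintype ι]

/-- The Zak transform of `f`: the periodization of `f` over the integer lattice, twisted by the
character `k ↦ exp (2πi ⟨η, k⟩)`.  The Dirac combs pair with `f` through its values. -/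
noncomputable def zak (η : ι → ℝ) (f : (ι → ℝ) → ℂ) (x : ι → ℝ) : ℂ :=
  ∑' k : ι → ℤ, 𝐞 (η ⬝ᵥ intVec k) • f (x + intVec k)

lemma hasSum_zak_mul_zak (f g : 𝓢(ι → ℝ, ℂ)) (η x : ι → ℝ) :
    HasSum (fun m : ι → ℤ => 𝐞 (-(η ⬝ᵥ intVec m)) •
      ∑' k : ι → ℤ, translateMul (intVec m) f g (x + intVec k))
      (zak η f x * zak (-η) g x) := by
  have hf : Summable fun k : ι → ℤ => ‖𝐞 (η ⬝ᵥ intVec k) • f (x + intVec k)‖ := by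
    simpa only [Circle.norm_smul] using summable_norm_comp_add_intVec f x
  have hg : Summable fun k : ι → ℤ => ‖𝐞 (-η ⬝ᵥ intVec k) • g (x + intVec k)‖ := by
    simpa only [Circle.norm_smul] using summable_norm_comp_add_intVec g x
  have hproduct := hasSum_tsum_sub_mul hf hg
  refine hproduct.congr_fun fun m => ?_
  rw [← tsum_const_smul']
  refine tsum_congr fun k => ?_
  have hphase : 𝐞 (η ⬝ᵥ intVec (k - m)) * 𝐞 (-η ⬝ᵥ intVec k) = 𝐞 (-(η ⬝ᵥ intVec m)) := by
    rw [← AddChar.map_add_eq_mul, map_sub, dotProduct_sub, neg_dotProduct]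
    ring_nf
  rw [translateMul_apply, ← hphase, smul_mul_smul_comm, map_sub, add_sub_assoc]

variable {N : ℕ} [NeZero N]

lemma summable_norm_dotFourierInv_translateMul_smul (f g : 𝓢(ι → ℝ, ℂ)) :
    Summable fun w : (ι → ℤ) × (ι → ℤ) =>
      ‖dotFourierInv (translateMul (intVec w.1) f g) ((N : ℝ) • intVec w.2)‖ := by
  have hinj : Function.Injective (Prod.map id (N • ·) : (ι → ℤ) × (ι → ℤ) → _) :=
    Function.injective_id.prodMap (smul_right_injective _ (NeZero.ne N))
  simpa only [Function.comp_def, Prod.map_fst, Prod.map_snd, id, map_nsmul,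
    ← Nat.cast_smul_eq_nsmul ℝ] using
    (summable_norm_dotFourierInv_translateMul f g).comp_injective hinj

variable [DecidableEq ι]

lemma tsum_gridPoint_eq_sum_tsum (h : 𝓢(ι → ℝ, ℂ)) (t : ι → ℝ) :
    ∑' l : ι → ℤ, h (gridPoint N t l) =
      ∑ j : ι → Fin N, ∑' k : ι → ℤ, h (gridPoint N t (fun i => (j i : ℤ)) + intVec k) := by
  simp only [tsum_eq_sum_tsum_residue (N := N) (summable_gridPoint h (NeZero.ne (N : ℝ)) t),
    gridPoint_nsmul_add]

lemma hasSum_sum_zak_mul_zak (f g : 𝓢(ι → ℝ, ℂ)) (η t : ι → ℝ) :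
    HasSum (fun m : ι → ℤ => 𝐞 (-(η ⬝ᵥ intVec m)) •
        ∑' l : ι → ℤ, translateMul (intVec m) f g (gridPoint N t l))
      (∑ j : ι → Fin N, zak η f (gridPoint N t fun i => (j i : ℤ)) *
        zak (-η) g (gridPoint N t fun i => (j i : ℤ))) := by
  simp only [tsum_gridPoint_eq_sum_tsum, Finset.smul_sum]
  exact hasSum_sum fun j _ => hasSum_zak_mul_zak f g η _

lemma tsum_dotFourierInv_translateMul_eq_sum_zak_mul_zak (f g : 𝓢(ι → ℝ, ℂ)) (η t : ι → ℝ) :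
    ∑' w : (ι → ℤ) × (ι → ℤ), 𝐞 (-(η ⬝ᵥ intVec w.1)) • 𝐞 (t ⬝ᵥ intVec w.2) •
        dotFourierInv (translateMul (intVec w.1) f g) ((N : ℝ) • intVec w.2) =
      ((N : ℂ) ^ Fintype.card ι)⁻¹ * ∑ j : ι → Fin N,
        zak η f (gridPoint N t fun i => (j i : ℤ)) *
          zak (-η) g (gridPoint N t fun i => (j i : ℤ)) := by
  have hN : (N : ℝ) ≠ 0 := NeZero.ne _
  have hsummable := summable_norm_dotFourierInv_translateMul_smul (N := N) f g
  have hpoisson (m : ι → ℤ) :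
      ∑' p : ι → ℤ, 𝐞 (t ⬝ᵥ intVec p) •
          dotFourierInv (translateMul (intVec m) f g) ((N : ℝ) • intVec p) =
        ((N : ℂ) ^ Fintype.card ι)⁻¹ *
          ∑' l : ι → ℤ, translateMul (intVec m) f g (gridPoint N t l) := by
    have hfiber : Summable fun p : ι → ℤ =>
        dotFourierInv (translateMul (intVec m) f g) ((N : ℝ) • intVec p) :=
      hsummable.of_norm.prod_factor m
    rw [tsum_gridPoint_eq_tsum_dotFourierInv _ hN hfiber,
      abs_of_nonneg (by positivity), Complex.real_smul, Complex.ofReal_pow, Complex.ofReal_natCast,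
      inv_mul_cancel_left₀ (pow_ne_zero _ (NeZero.ne _))]
  have hterms : Summable fun w : (ι → ℤ) × (ι → ℤ) => 𝐞 (-(η ⬝ᵥ intVec w.1)) •
      𝐞 (t ⬝ᵥ intVec w.2) •
        dotFourierInv (translateMul (intVec w.1) f g) ((N : ℝ) • intVec w.2) :=
    .of_norm (by simpa only [Circle.norm_smul] using hsummable)
  rw [hterms.tsum_prod, ← (hasSum_sum_zak_mul_zak f g η t).tsum_eq, ← tsum_mul_left]
  refine tsum_congr fun m => ?_
  simp only [tsum_const_smul', hpoisson, mul_smul_comm]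

end Zak

section Projector

lemma exp_two_pi_I_mul_mul (x : ℝ) (z : ℂ) :
    Complex.exp (2 * Real.pi * Complex.I * x) * z = 𝐞 x • z := by
  rw [Circle.smul_def, Real.fourierChar_apply, smul_eq_mul]
  push_cast
  ring_nf

lemma exp_neg_two_pi_I_mul_mul (x : ℝ) (z : ℂ) :
    Complex.exp (-(2 * Real.pi * Complex.I) * x) * z = 𝐞 (-x) • z := by
  rw [← exp_two_pi_I_mul_mul]
  push_cast
  ring_nf

variable {n : ℕ}

lemma sigmaR_castVec (θ : (Fin n → ℝ) × (Fin n → ℝ)) (w : (Fin n → ℤ) × (Fin n → ℤ)) :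
    sigmaR n θ (castVec n w) = θ.2 ⬝ᵥ intVec w.1 - θ.1 ⬝ᵥ intVec w.2 := by
  rw [dotProduct_comm θ.1]
  rfl

lemma sum_mul_intCast (η : Fin n → ℝ) (k : Fin n → ℤ) :
    ∑ i, η i * (k i : ℝ) = η ⬝ᵥ intVec k := rfl

lemma rho_castVec_apply (N : ℕ) (w : (Fin n → ℤ) × (Fin n → ℤ)) (f : (Fin n → ℝ) → ℂ)
    (y : Fin n → ℝ) :
    rho n N (castVec n w) (Complex.exp (Real.pi * Complex.I * (QR n (castVec n w) : ℝ))) f y =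
      𝐞 (y ⬝ᵥ ((N : ℝ) • intVec w.2)) • f (y - intVec w.1) := by
  rw [← exp_two_pi_I_mul_mul, rho, ← Complex.exp_nat_mul, ← Complex.exp_add,
    dotProduct_smul, dotProduct_comm]
  have hdot : ∑ i, (castVec n w).2 i * y i = intVec w.2 ⬝ᵥ y := rfl
  rw [hdot, smul_eq_mul, Complex.ofReal_mul, Complex.ofReal_natCast]
  congr 2
  ring

lemma exp_sigmaR_mul_integral_rho (N : ℕ) (θ : (Fin n → ℝ) × (Fin n → ℝ))
    (f g : 𝓢(Fin n → ℝ, ℂ)) (w : (Fin n → ℤ) × (Fin n → ℤ)) :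
    Complex.exp (-(2 * Real.pi * Complex.I) * (sigmaR n θ (castVec n w) : ℝ)) *
        ∫ y, rho n N (castVec n w)
          (Complex.exp (Real.pi * Complex.I * (QR n (castVec n w) : ℝ))) f y * g y =
      𝐞 (-(θ.2 ⬝ᵥ intVec w.1)) • 𝐞 (θ.1 ⬝ᵥ intVec w.2) •
        dotFourierInv (translateMul (intVec w.1) f g) ((N : ℝ) • intVec w.2) := by
  have hphase : 𝐞 (-sigmaR n θ (castVec n w)) =
      𝐞 (-(θ.2 ⬝ᵥ intVec w.1)) * 𝐞 (θ.1 ⬝ᵥ intVec w.2) := by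
    rw [sigmaR_castVec, neg_sub, sub_eq_neg_add, AddChar.map_add_eq_mul]
  rw [exp_neg_two_pi_I_mul_mul, hphase, mul_smul]
  simp only [rho_castVec_apply, smul_mul_assoc, dotFourierInv, translateMul_apply]

lemma gridPoint_natCast_add_intVec {N : ℕ} (t : Fin n → ℝ) (j : Fin n → Fin N) (k : Fin n → ℤ) :
    (fun i => (k i : ℝ) + (((j i : ℕ) : ℝ) - t i) / N) =
      gridPoint N t (fun i => (j i : ℤ)) + intVec k := by
  ext i
  simp [gridPoint, div_eq_inv_mul, add_comm]

end Projector

/-- Poisson summation formula for the projector `P_{N,θ}`: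
`Σ_{w∈ℤ^{2n}} e^{−2πiσ(θ,w)} ∫ (ρ_N(w,e^{πiQ(w)})f) g
  = N^{−n} Σ_{j∈{0,…,N−1}ⁿ} (Σ_k e^{2πi⟨θ₂,k⟩} f(k+(j−θ₁)/N)) (Σ_k e^{−2πi⟨θ₂,k⟩} g(k+(j−θ₁)/N))`,
all series converging absolutely. -/
theorem projector_poisson (n N : ℕ) (hN : 1 ≤ N) (θ : (Fin n → ℝ) × (Fin n → ℝ))
    (f g : SchwartzMap ((Fin n) → ℝ) ℂ) :
    Summable (fun w : (Fin n → ℤ) × (Fin n → ℤ) =>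
      ‖Complex.exp (-(2 * Real.pi * Complex.I) * ((sigmaR n θ (castVec n w) : ℝ) : ℂ)) *
        ∫ y : Fin n → ℝ,
          rho n N (castVec n w)
            (Complex.exp (Real.pi * Complex.I * ((QR n (castVec n w) : ℝ) : ℂ))) (⇑f) y
            * g y‖) ∧
    (∀ j : Fin n → Fin N,
      Summable (fun k : Fin n → ℤ =>
        ‖Complex.exp (2 * Real.pi * Complex.I * ((∑ i : Fin n, θ.2 i * (k i : ℝ) : ℝ) : ℂ))
          * f (fun i => (k i : ℝ) + (((j i : ℕ) : ℝ) - θ.1 i) / N)‖) ∧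
      Summable (fun k : Fin n → ℤ =>
        ‖Complex.exp (-(2 * Real.pi * Complex.I) * ((∑ i : Fin n, θ.2 i * (k i : ℝ) : ℝ) : ℂ))
          * g (fun i => (k i : ℝ) + (((j i : ℕ) : ℝ) - θ.1 i) / N)‖)) ∧
    (∑' w : (Fin n → ℤ) × (Fin n → ℤ),
        Complex.exp (-(2 * Real.pi * Complex.I) * ((sigmaR n θ (castVec n w) : ℝ) : ℂ)) *
          ∫ y : Fin n → ℝ,
            rho n N (castVec n w)
              (Complex.exp (Real.pi * Complex.I * ((QR n (castVec n w) : ℝ) : ℂ))) (⇑f) y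
              * g y)
      = ((N : ℂ) ^ n)⁻¹ *
          ∑ j : Fin n → Fin N,
            (∑' k : Fin n → ℤ,
              Complex.exp (2 * Real.pi * Complex.I *
                  ((∑ i : Fin n, θ.2 i * (k i : ℝ) : ℝ) : ℂ))
                * f (fun i => (k i : ℝ) + (((j i : ℕ) : ℝ) - θ.1 i) / N)) *
            (∑' k : Fin n → ℤ,
              Complex.exp (-(2 * Real.pi * Complex.I) *
                  ((∑ i : Fin n, θ.2 i * (k i : ℝ) : ℝ) : ℂ))
                * g (fun i => (k i : ℝ) + (((j i : ℕ) : ℝ) - θ.1 i) / N)) := by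
  have : NeZero N := ⟨by omega⟩
  simp only [exp_sigmaR_mul_integral_rho]
  simp only [sum_mul_intCast, exp_two_pi_I_mul_mul, exp_neg_two_pi_I_mul_mul, Circle.norm_smul,
    gridPoint_natCast_add_intVec]
  refine ⟨summable_norm_dotFourierInv_translateMul_smul f g, fun j =>
    ⟨summable_norm_comp_add_intVec f _, summable_norm_comp_add_intVec g _⟩, ?_⟩
  simpa only [zak, neg_dotProduct, Fintype.card_fin] using
    tsum_dotFourierInv_translateMul_eq_sum_zak_mul_zak f g θ.2 θ.1
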